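/- Let T be a pure quasinormal bounded operator on a nonzero complex Hilbert space H. If both m_{|T|} and ‖T‖ are eigenvalues of |T|, then the set of extended eigenvalues of T is σ_ext(T) = {λ ∈ ℂ : |λ| ≥ m_{|T|}/‖T‖}. -/

import Mathlib

open ContinuousLinearMap

noncomputable section

/-- The modulus `|T| = (T*T)^(1/2)` of a bounded operator on a complex Hilbert space. -/
def modulus {H : Type*} [NormedAddCommGroup H] [InnerProductSpace ℂ H] [CompleteSpace H]
    (T : H →L[ℂ] H) : H →L[ℂ] H :=
  CFC.sqrt (adjoint T ∘L T)

/-- A bounded operator is quasinormal if it commutes with its modulus. -/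
def IsQuasinormal {H : Type*} [NormedAddCommGroup H] [InnerProductSpace ℂ H] [CompleteSpace H]
    (T : H →L[ℂ] H) : Prop :=
  T ∘L modulus T = modulus T ∘L T

/-- `m_T = inf {⟨Tx,x⟩ : ‖x‖ = 1}` (real part of the inner product). -/
def mval {H : Type*} [NormedAddCommGroup H] [InnerProductSpace ℂ H]
    (T : H →L[ℂ] H) : ℝ :=
  sInf {r : ℝ | ∃ x : H, ‖x‖ = 1 ∧ r = T.reApplyInnerSelf x}

/-- The set of intertwining values `Λ_int(R,M)`. -/
def intertwiningValues {H K : Type*} [NormedAddCommGroup H] [InnerProductSpace ℂ H]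
    [NormedAddCommGroup K] [InnerProductSpace ℂ K]
    (R : H →L[ℂ] H) (M : K →L[ℂ] K) : Set ℂ :=
  {l : ℂ | ∃ X : K →L[ℂ] H, X ≠ 0 ∧ R ∘L X = l • (X ∘L M)}

/-- The set of extended eigenvalues `σ_ext(T)`. -/
def extSpectrum {H : Type*} [NormedAddCommGroup H] [InnerProductSpace ℂ H]
    (T : H →L[ℂ] H) : Set ℂ :=
  {l : ℂ | ∃ X : H →L[ℂ] H, X ≠ 0 ∧ T ∘L X = l • (X ∘L T)}

/-- The set `𝒜_r(R,A)` of operators `L` with `‖Rⁿ(Lx)‖ ≤ c·rⁿ·‖Aⁿx‖` for all `n, x`. -/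
def calA {H 𝔏 : Type*} [NormedAddCommGroup H] [InnerProductSpace ℂ H]
    [NormedAddCommGroup 𝔏] [InnerProductSpace ℂ 𝔏]
    (r : ℝ) (R : H →L[ℂ] H) (A : 𝔏 →L[ℂ] 𝔏) : Set (𝔏 →L[ℂ] H) :=
  {L : 𝔏 →L[ℂ] H | ∃ c : ℝ, 0 ≤ c ∧
    ∀ (n : ℕ) (x : 𝔏), ‖(R ^ n) (L x)‖ ≤ c * r ^ n * ‖(A ^ n) x‖}

/-- An operator is pure if it has no nonzero reducing subspace on which it is normal. -/
def IsPure {H : Type*} [NormedAddCommGroup H] [InnerProductSpace ℂ H] [CompleteSpace H]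
    (T : H →L[ℂ] H) : Prop :=
  ∀ M : Submodule ℂ H, IsClosed (M : Set H) → (∀ x ∈ M, T x ∈ M) →
    (∀ x ∈ M, adjoint T x ∈ M) →
    (∀ x ∈ M, T (adjoint T x) = adjoint T (T x)) → M = ⊥

universe u

/-- An operator is subnormal if it has a normal extension on a larger Hilbert space. -/
def IsSubnormal {F : Type*} [NormedAddCommGroup F] [InnerProductSpace ℂ F] [CompleteSpace F]
    (T : F →L[ℂ] F) : Prop :=
  ∃ (K : Type u) (_ : NormedAddCommGroup K) (_ : InnerProductSpace ℂ K) (_ : CompleteSpace K)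
    (j : F →ₗᵢ[ℂ] K) (M : K →L[ℂ] K),
      adjoint M ∘L M = M ∘L adjoint M ∧ ∀ x : F, M (j x) = j (T x)

end

/-!
If `T X = l X T` and `m ‖y‖ ≤ ‖T y‖`, then `m ‖X‖ ≤ ‖T X‖ = ‖l X T‖ ≤ ‖l‖ ‖X‖ ‖T‖`, so `X ≠ 0`
forces `m / ‖T‖ ≤ ‖l‖`. Conversely, the eigenspaces of `|T|` reduce a quasinormal `T`, and purity
puts in each nonzero one, with eigenvalue `a`, a unit vector `v` killed by `T*`. The vectors
`a⁻ⁿ Tⁿ v` are then orthonormal and span a reducing subspace on which `T` is `a` times the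
unilateral shift. Taking such sequences `e` for `m` and `f` for `‖T‖`, the operator `f n ↦ qⁿ e n`,
vanishing on the orthogonal complement of `f`, is bounded for `‖q‖ ≤ 1` and is an intertwiner with
factor `l` as soon as `m = l q ‖T‖`.
-/

section Modulus

variable {H : Type*} [NormedAddCommGroup H] [InnerProductSpace ℂ H] [CompleteSpace H]

lemma modulus_nonneg (T : H →L[ℂ] H) : 0 ≤ modulus T :=
  CFC.abs_nonneg T

lemma isSelfAdjoint_modulus (T : H →L[ℂ] H) : IsSelfAdjoint (modulus T) :=
  .of_nonneg (modulus_nonneg T)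

lemma modulus_apply_modulus_apply (T : H →L[ℂ] H) (x : H) :
    modulus T (modulus T x) = adjoint T (T x) :=
  DFunLike.congr_fun (CFC.abs_mul_abs T) x

lemma norm_modulus_apply (T : H →L[ℂ] H) (x : H) : ‖modulus T x‖ = ‖T x‖ := by
  rw [apply_norm_eq_sqrt_inner_adjoint_left, apply_norm_eq_sqrt_inner_adjoint_left,
    (isSelfAdjoint_modulus T).adjoint_eq, comp_apply, comp_apply, modulus_apply_modulus_apply]

end Modulus

section LowerBound

variable {H : Type*} [NormedAddCommGroup H] [InnerProductSpace ℂ H]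

lemma mval_mul_norm_sq_le_reApplyInnerSelf (A : H →L[ℂ] H) (x : H) :
    mval A * ‖x‖ ^ 2 ≤ A.reApplyInnerSelf x := by
  rcases eq_or_ne x 0 with rfl | hx
  · simp [reApplyInnerSelf_apply]
  have bddBelow : BddBelow {r : ℝ | ∃ y : H, ‖y‖ = 1 ∧ r = A.reApplyInnerSelf y} := by
    refine ⟨-‖A‖, ?_⟩
    rintro _ ⟨y, hy, rfl⟩
    have bound : ‖inner ℂ (A y) y‖ ≤ ‖A‖ := by
      simpa [hy] using (norm_inner_le_norm (𝕜 := ℂ) (A y) y).trans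
        (mul_le_mul_of_nonneg_right (A.le_opNorm y) (norm_nonneg y))
    exact (abs_le.1 ((RCLike.abs_re_le_norm _).trans bound)).1
  have le_unit : mval A ≤ A.reApplyInnerSelf ((‖x‖ : ℂ)⁻¹ • x) :=
    csInf_le bddBelow ⟨_, by simpa using norm_smul_inv_norm (𝕜 := ℂ) hx, rfl⟩
  rw [reApplyInnerSelf_smul, norm_inv, Complex.norm_real, norm_norm, inv_pow, inv_mul_eq_div,
    le_div_iff₀ (by positivity)] at le_unit
  exact le_unit

lemma mval_mul_norm_le_norm_apply (A : H →L[ℂ] H) (x : H) : mval A * ‖x‖ ≤ ‖A x‖ := by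
  rcases eq_or_ne x 0 with rfl | hx
  · simp
  refine le_of_mul_le_mul_right ?_ (norm_pos_iff.2 hx)
  calc mval A * ‖x‖ * ‖x‖ = mval A * ‖x‖ ^ 2 := by ring
    _ ≤ A.reApplyInnerSelf x := mval_mul_norm_sq_le_reApplyInnerSelf A x
    _ ≤ ‖inner ℂ (A x) x‖ := RCLike.re_le_norm _
    _ ≤ ‖A x‖ * ‖x‖ := norm_inner_le_norm _ _

lemma mval_nonneg {A : H →L[ℂ] H} (hA : ∀ x, 0 ≤ A.reApplyInnerSelf x) : 0 ≤ mval A := by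
  refine Real.sInf_nonneg ?_
  rintro _ ⟨x, -, rfl⟩
  exact hA x

end LowerBound

section Quasinormal

lemma apply_mem_eigenspace_of_commute {R M : Type*} [CommRing R] [AddCommGroup M] [Module R M]
    [TopologicalSpace M] [ContinuousAdd M] {A B : M →L[R] M} (hAB : Commute A B) {a : R} {x : M}
    (hx : x ∈ Module.End.eigenspace (A : M →ₗ[R] M) a) :
    B x ∈ Module.End.eigenspace (A : M →ₗ[R] M) a :=
  Module.End.mapsTo_genEigenspace_of_comm (hAB.map toLinearMapRingHom) a 1 hx

variable {H : Type*} [NormedAddCommGroup H] [InnerProductSpace ℂ H] [CompleteSpace H]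
  {T : H →L[ℂ] H}

lemma IsQuasinormal.commute_modulus (hT : IsQuasinormal T) : Commute (modulus T) T :=
  Eq.symm hT

lemma IsQuasinormal.commute_modulus_adjoint (hT : IsQuasinormal T) :
    Commute (modulus T) (adjoint T) := by
  simpa only [(isSelfAdjoint_modulus T).star_eq, star_eq_adjoint] using
    hT.commute_modulus.star_star

lemma adjoint_apply_apply_of_mem_eigenspace_modulus {a : ℂ} {x : H}
    (hx : x ∈ Module.End.eigenspace (modulus T : H →ₗ[ℂ] H) a) :
    adjoint T (T x) = (a * a) • x := by
  rw [Module.End.mem_eigenspace_iff, coe_coe] at hx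
  rw [← modulus_apply_modulus_apply, hx, map_smul, hx, smul_smul]

lemma IsPure.ne_zero [Nontrivial H] (hT : IsPure T) : T ≠ 0 := by
  rintro rfl
  exact top_ne_bot (hT ⊤ isClosed_univ (by simp) (by simp) (by simp))

lemma IsPure.exists_mem_adjoint_apply_eq_zero (hT : IsPure T) {M : Submodule ℂ H}
    (hM_closed : IsClosed (M : Set H)) (hM_map : ∀ x ∈ M, T x ∈ M)
    (hM_adjoint : ∀ x ∈ M, adjoint T x ∈ M) {c : ℂ} (hM_scalar : ∀ x ∈ M, adjoint T (T x) = c • x)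
    (hM_ne : M ≠ ⊥) : ∃ x ∈ M, x ≠ 0 ∧ adjoint T x = 0 := by
  by_contra! adjoint_ne
  refine hM_ne (hT M hM_closed hM_map hM_adjoint fun x hx => sub_eq_zero.1 ?_)
  have commutator_mem : T (adjoint T x) - adjoint T (T x) ∈ M :=
    M.sub_mem (hM_map _ (hM_adjoint x hx)) (hM_adjoint _ (hM_map x hx))
  by_contra commutator_ne
  refine adjoint_ne _ commutator_mem commutator_ne ?_
  rw [map_sub, hM_scalar _ (hM_adjoint x hx), hM_scalar x hx, map_smul, sub_self]

lemma IsQuasinormal.modulus_eigenvalue_ne_zero (hT : IsQuasinormal T) (hpure : IsPure T) {a : ℂ}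
    {x : H} (hx : x ≠ 0) (hax : modulus T x = a • x) : a ≠ 0 := by
  rintro rfl
  let M := Module.End.eigenspace (modulus T : H →ₗ[ℂ] H) 0
  have mem_adjoint : ∀ y ∈ M, adjoint T y ∈ M := fun y =>
    apply_mem_eigenspace_of_commute hT.commute_modulus_adjoint
  have map_eq_zero : ∀ y ∈ M, T y = 0 := fun y hy => by
    rw [Module.End.mem_eigenspace_iff, coe_coe, zero_smul] at hy
    rw [← norm_eq_zero, ← norm_modulus_apply, hy, norm_zero]
  have M_eq_bot : M = ⊥ := by
    refine hpure M (isClosed_eigenspace _ _) (fun y hy => ?_) mem_adjoint fun y hy => ?_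
    · rw [map_eq_zero y hy]
      exact M.zero_mem
    · rw [map_eq_zero _ (mem_adjoint y hy), map_eq_zero y hy, map_zero]
  have x_mem : x ∈ M := Module.End.mem_eigenspace_iff.2 hax
  exact hx ((Submodule.eq_bot_iff M).1 M_eq_bot x x_mem)

lemma IsQuasinormal.exists_unit_modulus_eigenvector_adjoint_apply_eq_zero (hT : IsQuasinormal T)
    (hpure : IsPure T) {a : ℂ} {x : H} (hx : x ≠ 0) (hax : modulus T x = a • x) :
    ∃ v ∈ Module.End.eigenspace (modulus T : H →ₗ[ℂ] H) a, ‖v‖ = 1 ∧ adjoint T v = 0 := by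
  let M := Module.End.eigenspace (modulus T : H →ₗ[ℂ] H) a
  have M_ne_bot : M ≠ ⊥ :=
    M.ne_bot_iff.2 ⟨x, Module.End.mem_eigenspace_iff.2 hax, hx⟩
  obtain ⟨v, hvM, hv, hTv⟩ := hpure.exists_mem_adjoint_apply_eq_zero
    (isClosed_eigenspace (modulus T) a)
    (fun _ => apply_mem_eigenspace_of_commute hT.commute_modulus)
    (fun _ => apply_mem_eigenspace_of_commute hT.commute_modulus_adjoint)
    (fun _ => adjoint_apply_apply_of_mem_eigenspace_modulus) M_ne_bot
  exact ⟨(‖v‖ : ℂ)⁻¹ • v, M.smul_mem _ hvM, norm_smul_inv_norm hv, by rw [map_smul, hTv, smul_zero]⟩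

end Quasinormal

section ShiftChain

lemma orthonormal_of_inner_succ_succ {𝕜 E : Type*} [RCLike 𝕜] [SeminormedAddCommGroup E]
    [InnerProductSpace 𝕜 E] {e : ℕ → E} (norm_e_zero : ‖e 0‖ = 1)
    (inner_zero_succ : ∀ n, inner 𝕜 (e 0) (e (n + 1)) = 0)
    (inner_succ_succ : ∀ i j, inner 𝕜 (e (i + 1)) (e (j + 1)) = inner 𝕜 (e i) (e j)) :
    Orthonormal 𝕜 e := by
  rw [orthonormal_iff_ite]
  intro i
  induction i with
  | zero =>
    rintro (_ | j)
    · simp [inner_self_eq_norm_sq_to_K, norm_e_zero]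
    · simp [inner_zero_succ]
  | succ i ih =>
    rintro (_ | j)
    · simp [← inner_conj_symm (e (i + 1)), inner_zero_succ]
    · simp [inner_succ_succ, ih]

variable {H : Type*} [NormedAddCommGroup H] [InnerProductSpace ℂ H] [CompleteSpace H]

/-- The orthonormal sequence `e` spans a reducing subspace of `T` on which `T` is `a` times the
unilateral shift `e n ↦ e (n + 1)`. Reduction is encoded by the two formulas for `adjoint T`. -/
structure IsShiftChain (T : H →L[ℂ] H) (a : ℝ) (e : ℕ → H) : Prop where
  orthonormal : Orthonormal ℂ e
  map : ∀ n, T (e n) = (a : ℂ) • e (n + 1)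
  adjoint_zero : adjoint T (e 0) = 0
  adjoint_succ : ∀ n, adjoint T (e (n + 1)) = (a : ℂ) • e n

lemma IsQuasinormal.isShiftChain {T : H →L[ℂ] H} (hT : IsQuasinormal T) {a : ℝ} (ha : a ≠ 0)
    {v : H} (hav : v ∈ Module.End.eigenspace (modulus T : H →ₗ[ℂ] H) (a : ℂ)) (hv : ‖v‖ = 1)
    (hTv : adjoint T v = 0) : IsShiftChain T a fun n => (((a : ℂ)⁻¹ • T) ^ n) v := by
  have ha' : (a : ℂ) ≠ 0 := Complex.ofReal_ne_zero.2 ha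
  set e : ℕ → H := fun n => (((a : ℂ)⁻¹ • T) ^ n) v
  have e_succ : ∀ n, e (n + 1) = (a : ℂ)⁻¹ • T (e n) := fun n =>
    DFunLike.congr_fun (pow_succ' ((a : ℂ)⁻¹ • T) n) v
  have e_mem : ∀ n, e n ∈ Module.End.eigenspace (modulus T : H →ₗ[ℂ] H) (a : ℂ) := fun n =>
    apply_mem_eigenspace_of_commute ((hT.commute_modulus.smul_right _).pow_right n) hav
  have adjoint_succ : ∀ n, adjoint T (e (n + 1)) = (a : ℂ) • e n := fun n => by
    rw [e_succ, map_smul, adjoint_apply_apply_of_mem_eigenspace_modulus (e_mem n), smul_smul,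
      inv_mul_cancel_left₀ ha']
  have inner_succ : ∀ x n, inner ℂ x (e (n + 1)) = (a : ℂ)⁻¹ * inner ℂ (adjoint T x) (e n) :=
    fun x n => by rw [e_succ, inner_smul_right, adjoint_inner_left]
  refine ⟨orthonormal_of_inner_succ_succ hv (fun n => ?_) fun i j => ?_, fun n => ?_, hTv,
    adjoint_succ⟩
  · rw [inner_succ, show adjoint T (e 0) = 0 from hTv, inner_zero_left, mul_zero]
  · rw [inner_succ, adjoint_succ, inner_smul_left, Complex.conj_ofReal, inv_mul_cancel_left₀ ha']
  · rw [e_succ, smul_inv_smul₀ ha']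

lemma IsQuasinormal.exists_isShiftChain {T : H →L[ℂ] H} (hT : IsQuasinormal T) (hpure : IsPure T)
    {a : ℝ} {x : H} (hx : x ≠ 0) (hax : modulus T x = (a : ℂ) • x) :
    ∃ e : ℕ → H, IsShiftChain T a e := by
  have ha : a ≠ 0 := Complex.ofReal_ne_zero.1 (hT.modulus_eigenvalue_ne_zero hpure hx hax)
  obtain ⟨v, hav, hv, hTv⟩ :=
    hT.exists_unit_modulus_eigenvector_adjoint_apply_eq_zero hpure hx hax
  exact ⟨_, hT.isShiftChain ha hav hv hTv⟩

lemma IsShiftChain.inner_zero_apply {T : H →L[ℂ] H} {a : ℝ} {e : ℕ → H} (he : IsShiftChain T a e)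
    (x : H) : inner ℂ (e 0) (T x) = 0 := by
  rw [← adjoint_inner_left, he.adjoint_zero, inner_zero_left]

lemma IsShiftChain.inner_succ_apply {T : H →L[ℂ] H} {a : ℝ} {e : ℕ → H} (he : IsShiftChain T a e)
    (n : ℕ) (x : H) : inner ℂ (e (n + 1)) (T x) = a * inner ℂ (e n) x := by
  rw [← adjoint_inner_left, he.adjoint_succ, inner_smul_left, Complex.conj_ofReal]

end ShiftChain

section Intertwining

lemma exists_clm_hasSum_mul_inner_smul {ι 𝕜 E F : Type*} [RCLike 𝕜]
    [NormedAddCommGroup E] [InnerProductSpace 𝕜 E] [CompleteSpace E]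
    [NormedAddCommGroup F] [InnerProductSpace 𝕜 F] [CompleteSpace F]
    {e : ι → F} {f : ι → E} (he : Orthonormal 𝕜 e) (hf : Orthonormal 𝕜 f)
    {c : ι → 𝕜} {C : ℝ} (hc : ∀ i, ‖c i‖ ≤ C) :
    ∃ X : E →L[𝕜] F, ∀ x, HasSum (fun i => (c i * inner 𝕜 (f i) x) • e i) (X x) := by
  classical
  let V := hf.orthogonalFamily.linearIsometry.toContinuousLinearMap
  let W := he.orthogonalFamily.linearIsometry.toContinuousLinearMap
  let D : lp (fun _ : ι => 𝕜) 2 →L[𝕜] lp (fun _ : ι => 𝕜) 2 :=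
    lp.mapCLM 2 (fun i => c i • ContinuousLinearMap.id 𝕜 𝕜) (abs_nonneg C) fun i => by
      simpa [norm_smul] using (hc i).trans (le_abs_self C)
  have adjoint_coord : ∀ x i, adjoint V x i = inner 𝕜 (f i) x := fun x i => by
    have inner_single := lp.inner_single_left (𝕜 := 𝕜) i (1 : 𝕜) (adjoint V x)
    rw [adjoint_inner_right] at inner_single
    simpa [V] using inner_single.symm
  refine ⟨W ∘L D ∘L adjoint V, fun x => ?_⟩
  simpa [W, D, adjoint_coord] using
    he.orthogonalFamily.hasSum_linearIsometry (D (adjoint V x))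

variable {H K : Type*} [NormedAddCommGroup H] [InnerProductSpace ℂ H]
  [NormedAddCommGroup K] [InnerProductSpace ℂ K] {R : H →L[ℂ] H} {M : K →L[ℂ] K}

lemma extSpectrum_eq_intertwiningValues (T : H →L[ℂ] H) :
    extSpectrum T = intertwiningValues T T :=
  rfl

lemma le_norm_mul_norm_of_mem_intertwiningValues {m : ℝ} (hR : ∀ y, m * ‖y‖ ≤ ‖R y‖) {l : ℂ}
    (hl : l ∈ intertwiningValues R M) : m ≤ ‖l‖ * ‖M‖ := by
  obtain ⟨X, hX, hRX⟩ := hl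
  by_contra! hlt
  have m_pos : 0 < m := lt_of_le_of_lt (by positivity) hlt
  have X_bound : ‖X‖ ≤ ‖R ∘L X‖ / m :=
    X.opNorm_le_bound (by positivity) fun x => by
      rw [div_mul_eq_mul_div, le_div_iff₀' m_pos]
      exact (hR (X x)).trans ((R ∘L X).le_opNorm x)
  have X_norm_pos : 0 < ‖X‖ := norm_pos_iff.2 hX
  refine hlt.not_ge (le_of_mul_le_mul_right ?_ X_norm_pos)
  calc m * ‖X‖ ≤ ‖R ∘L X‖ := (le_div_iff₀' m_pos).1 X_bound
    _ = ‖l‖ * ‖X ∘L M‖ := by rw [hRX, norm_smul]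
    _ ≤ ‖l‖ * (‖X‖ * ‖M‖) := by gcongr; exact X.opNorm_comp_le M
    _ = ‖l‖ * ‖M‖ * ‖X‖ := by ring

variable [CompleteSpace H] [CompleteSpace K] {a b : ℝ} {e : ℕ → H} {f : ℕ → K}

lemma IsShiftChain.mem_intertwiningValues_of_eq_mul (he : IsShiftChain R a e)
    (hf : IsShiftChain M b f) {l q : ℂ} (hq : ‖q‖ ≤ 1) (habq : (a : ℂ) = l * q * b) :
    l ∈ intertwiningValues R M := by
  obtain ⟨X, hX⟩ := exists_clm_hasSum_mul_inner_smul he.orthonormal hf.orthonormal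
    (c := fun n => q ^ n) (C := 1) fun n => by
      simpa only [norm_pow] using pow_le_one₀ (norm_nonneg q) hq
  refine ⟨X, ?_, ?_⟩
  · have X_f_zero : X (f 0) = e 0 := by
      refine (hX (f 0)).unique ?_
      have sum_single := hasSum_single (f := fun n => (q ^ n * inner ℂ (f n) (f 0)) • e n) 0
        fun n hn => by rw [hf.orthonormal.2 hn, mul_zero, zero_smul]
      simpa [hf.orthonormal.1 0] using sum_single
    rintro rfl
    exact he.orthonormal.ne_zero 0 X_f_zero.symm
  · ext x
    have sum_XM := (hX (M x)).const_smul l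
    rw [← hasSum_nat_add_iff' 1, Finset.sum_range_one, hf.inner_zero_apply, mul_zero, zero_smul,
      smul_zero, sub_zero] at sum_XM
    refine ((hX x).mapL R).unique ?_
    convert! sum_XM using 2 with n
    rw [map_smul, he.map, hf.inner_succ_apply, smul_smul, smul_smul, habq]
    ring_nf

lemma IsShiftChain.mem_intertwiningValues (he : IsShiftChain R a e) (hf : IsShiftChain M b f)
    (ha : 0 ≤ a) {l : ℂ} (hl : a ≤ ‖l‖ * b) : l ∈ intertwiningValues R M := by
  refine he.mem_intertwiningValues_of_eq_mul hf (q := a / (l * b)) ?_ ?_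
  · rw [norm_div, norm_mul, Complex.norm_of_nonneg ha, Complex.norm_real, Real.norm_eq_abs]
    exact div_le_one_of_le₀ (hl.trans (by gcongr; exact le_abs_self b)) (by positivity)
  · have eq_zero_of_mul_eq_zero (hlb : l * b = 0) : (a : ℂ) = 0 := by
      have norm_mul_eq_zero : ‖l‖ * b = 0 := by simpa using hlb
      exact_mod_cast le_antisymm (hl.trans norm_mul_eq_zero.le) ha
    rw [mul_right_comm, mul_div_cancel_of_imp' eq_zero_of_mul_eq_zero]

end Intertwining

theorem extSpectrum_pure_quasinormal_of_eigenvalues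
    {H : Type*} [NormedAddCommGroup H] [InnerProductSpace ℂ H] [CompleteSpace H] [Nontrivial H]
    (T : H →L[ℂ] H) (hTqn : IsQuasinormal T) (hTpure : IsPure T)
    (hmeig : ∃ x : H, x ≠ 0 ∧ modulus T x = (mval (modulus T) : ℂ) • x)
    (hneig : ∃ x : H, x ≠ 0 ∧ modulus T x = (‖T‖ : ℂ) • x) :
    extSpectrum T = {l : ℂ | mval (modulus T) / ‖T‖ ≤ ‖l‖} := by
  have hN : 0 < ‖T‖ := norm_pos_iff.2 hTpure.ne_zero
  have hm : 0 ≤ mval (modulus T) :=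
    mval_nonneg ((nonneg_iff_isPositive _).1 (modulus_nonneg T)).2
  have T_lower_bound : ∀ x, mval (modulus T) * ‖x‖ ≤ ‖T x‖ := fun x =>
    norm_modulus_apply T x ▸ mval_mul_norm_le_norm_apply (modulus T) x
  obtain ⟨x, hx, hmx⟩ := hmeig
  obtain ⟨y, hy, hNy⟩ := hneig
  obtain ⟨e, he⟩ := hTqn.exists_isShiftChain hTpure hx hmx
  obtain ⟨f, hf⟩ := hTqn.exists_isShiftChain hTpure hy hNy
  ext l
  rw [extSpectrum_eq_intertwiningValues, Set.mem_ofPred_eq, div_le_iff₀ hN]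
  exact ⟨le_norm_mul_norm_of_mem_intertwiningValues T_lower_bound, he.mem_intertwiningValues hf hm⟩
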